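/- For the sequence (n_k)_{k≥1} of the explicit construction and for all a, b ∈ ℕ with a ≠ b, there is a constant C (depending only on ε, R, d, a, b) such that for all N ≥ 2 and all integers c ≥ 0 one has L(N,a,b,c) ≤ C·N/(log N)^{1−ε}. -/

import Mathlib

open Real MeasureTheory Filter Finset

noncomputable section

/-- The block `Δ_i` of `R^i` consecutive positive integers. -/
def Block (R i : ℕ) : Finset ℕ :=
  Finset.Icc ((R ^ i - R) / (R - 1) + 1) ((R ^ (i + 1) - R) / (R - 1))

/-- `M(i) = ⌈i^(1-ε)⌉`. -/
def Mfun (ε : ℝ) (i : ℕ) : ℕ := ⌈(i : ℝ) ^ (1 - ε)⌉₊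

/-- The explicit construction: parameters `ε ∈ (0,1)`, an integer `R > 8/ε`, an integer
`d ≥ 1`, for each `i ≥ 1` a partition of `Δ_i` into consecutive intervals of integers
`Δ_i^(1) < ⋯ < Δ_i^(M(i))` (element-wise) of essentially equal cardinality, and the
sequence `n_k := 2^(2^(i^4)) * (2^k + m)` for `k ∈ Δ_i^(m)`. -/
structure ExplicitConstruction where
  ε : ℝ
  R : ℕ
  d : ℕ
  sub : ℕ → ℕ → Finset ℕ
  n : ℕ → ℕ
  hε : ε ∈ Set.Ioo (0 : ℝ) 1
  hR : 8 / ε < (R : ℝ)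
  hd : 1 ≤ d
  hpart : ∀ i, 1 ≤ i → Block R i = (Finset.Icc 1 (Mfun ε i)).biUnion (sub i)
  hconsec : ∀ i, 1 ≤ i → ∀ m ∈ Finset.Icc 1 (Mfun ε i), ∃ lo hi, sub i m = Finset.Icc lo hi
  horder : ∀ i, 1 ≤ i → ∀ m ∈ Finset.Icc 1 (Mfun ε i), ∀ m' ∈ Finset.Icc 1 (Mfun ε i),
    m < m' → ∀ k ∈ sub i m, ∀ l ∈ sub i m', k < l
  hcard : ∀ i, 1 ≤ i → ∀ m ∈ Finset.Icc 1 (Mfun ε i),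
    |((sub i m).card : ℝ) - (R : ℝ) ^ i / (Mfun ε i : ℝ)| ≤ 1
  hn : ∀ i, 1 ≤ i → ∀ m ∈ Finset.Icc 1 (Mfun ε i), ∀ k ∈ sub i m,
    n k = 2 ^ 2 ^ i ^ 4 * (2 ^ k + m)

def gfun (R i : ℕ) : ℕ := (R ^ i - R) / (R - 1)

lemma gfun_succ (R i : ℕ) (hR : 2 ≤ R) (hi : 1 ≤ i) : gfun R (i + 1) = gfun R i + R ^ i := by
  unfold gfun
  have h1 : R ≤ R ^ i := by
    calc R = R ^ 1 := (pow_one R).symm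
      _ ≤ R ^ i := Nat.pow_le_pow_right (by omega) hi
  have h2 : R ^ (i + 1) - R = (R ^ i - R) + R ^ i * (R - 1) := by
    obtain ⟨r, rfl⟩ : ∃ r, R = r + 1 := ⟨R - 1, by omega⟩
    simp only [Nat.add_sub_cancel]
    have : (r + 1) ^ (i + 1) = (r + 1) ^ i * r + (r + 1) ^ i := by ring
    omega
  rw [h2, Nat.add_mul_div_right _ _ (by omega)]

lemma gfun_one (R : ℕ) : gfun R 1 = 0 := by simp [gfun]

lemma gfun_mono (R : ℕ) (hR : 2 ≤ R) {i j : ℕ} (hi : 1 ≤ i) (hij : i ≤ j) :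
    gfun R i ≤ gfun R j := by
  induction j, hij using Nat.le_induction with
  | base => exact le_rfl
  | succ j hj ih => rw [gfun_succ R j hR (by omega)]; omega

lemma gfun_ge (R : ℕ) (hR : 2 ≤ R) (i : ℕ) (hi : 1 ≤ i) : i ≤ gfun R i + 1 := by
  induction i, hi using Nat.le_induction with
  | base => omega
  | succ j hj ih =>
    rw [gfun_succ R j hR hj]
    have : 1 ≤ R ^ j := Nat.one_le_pow _ _ (by omega)
    omega

lemma gfun_lower (R : ℕ) (hR : 2 ≤ R) (i : ℕ) (hi : 1 ≤ i) : R ^ i ≤ R * (gfun R i + 1) := by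
  cases i with
  | zero => omega
  | succ j =>
    rcases Nat.eq_zero_or_pos j with rfl | hj
    · simp [gfun_one]
    · rw [gfun_succ R j hR hj, pow_succ]
      nlinarith [Nat.zero_le (gfun R j)]

lemma gfun_upper (R : ℕ) (hR : 2 ≤ R) (i : ℕ) : gfun R i ≤ R ^ i :=
  (Nat.div_le_self _ _).trans (Nat.sub_le _ _)

lemma mem_block (R i k : ℕ) : k ∈ Block R i ↔ gfun R i < k ∧ k ≤ gfun R (i + 1) := by
  unfold Block gfun
  rw [Finset.mem_Icc, Nat.succ_le_iff]

lemma exists_block (R : ℕ) (hR : 2 ≤ R) (k : ℕ) (hk : 1 ≤ k) : ∃ i, 1 ≤ i ∧ k ∈ Block R i := by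
  have hex : ∃ i, k ≤ gfun R (i + 1) := ⟨k, by have := gfun_ge R hR (k + 1) (by omega); omega⟩
  refine ⟨Nat.find hex, ?_, ?_⟩
  · by_contra h
    have h0 : Nat.find hex = 0 := by omega
    have := Nat.find_spec hex
    rw [h0, zero_add, gfun_one] at this
    omega
  · rw [mem_block]
    refine ⟨?_, Nat.find_spec hex⟩
    by_contra h
    push Not at h
    have hpos : Nat.find hex ≠ 0 := by
      intro h0
      have := Nat.find_spec hex
      rw [h0, zero_add, gfun_one] at this
      omega
    have := Nat.find_min hex (m := Nat.find hex - 1) (by omega)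
    rw [Nat.sub_add_cancel (by omega)] at this
    exact this h

lemma block_le (R : ℕ) (hR : 2 ≤ R) {i j k l : ℕ} (hi : 1 ≤ i) (hj : 1 ≤ j)
    (hk : k ∈ Block R i) (hl : l ∈ Block R j) (hkl : k ≤ l) : i ≤ j := by
  rw [mem_block] at hk hl
  by_contra h
  have := gfun_mono R hR (i := j + 1) (j := i) (by omega) (by omega)
  omega

namespace ExplicitConstruction

variable (E : ExplicitConstruction)

lemma R_ge : 9 ≤ E.R := by
  have h := E.hR
  have h1 := E.hε.1
  have h2 := E.hε.2
  have : (8 : ℝ) < E.R := by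
    refine lt_trans ?_ h
    rw [lt_div_iff₀ h1]; linarith
  exact_mod_cast this

lemma M_le (i : ℕ) (hi : 1 ≤ i) : Mfun E.ε i ≤ i := by
  unfold Mfun
  rw [Nat.ceil_le]
  have : (1 : ℝ) ≤ i := by exact_mod_cast hi
  calc (i : ℝ) ^ (1 - E.ε) ≤ (i : ℝ) ^ (1 : ℝ) :=
        Real.rpow_le_rpow_of_exponent_le this (by linarith [E.hε.1])
    _ = i := Real.rpow_one _

/-- data of an index -/
def Dat (k i m : ℕ) : Prop := 1 ≤ i ∧ m ∈ Finset.Icc 1 (Mfun E.ε i) ∧ k ∈ E.sub i m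

variable {E}

lemma Dat.block {k i m : ℕ} (h : E.Dat k i m) : k ∈ Block E.R i := by
  rw [E.hpart i h.1]
  exact Finset.mem_biUnion.2 ⟨m, h.2.1, h.2.2⟩

lemma dat_of_block {k i : ℕ} (hi : 1 ≤ i) (h : k ∈ Block E.R i) : ∃ m, E.Dat k i m := by
  rw [E.hpart i hi] at h
  obtain ⟨m, hm, hk⟩ := Finset.mem_biUnion.1 h
  exact ⟨m, hi, hm, hk⟩

lemma exists_dat {k : ℕ} (hk : 1 ≤ k) : ∃ i m, E.Dat k i m := by
  obtain ⟨i, hi, h⟩ := exists_block E.R (by have := E.R_ge; omega) k hk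
  exact ⟨i, dat_of_block hi h⟩

lemma Dat.n_eq {k i m : ℕ} (h : E.Dat k i m) : E.n k = 2 ^ 2 ^ i ^ 4 * (2 ^ k + m) :=
  E.hn i h.1 m h.2.1 k h.2.2

lemma Dat.m_le {k i m : ℕ} (h : E.Dat k i m) : m ≤ 2 ^ k := by
  have h1 := (Finset.mem_Icc.1 h.2.1).2
  have h2 := E.M_le i h.1
  have h3 := gfun_ge E.R (by have := E.R_ge; omega) i h.1
  have h4 := ((mem_block _ _ _).1 h.block).1
  have : k < 2 ^ k := Nat.lt_two_pow_self
  omega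

lemma n_growth {k l : ℕ} (hk : 1 ≤ k) (hkl : k < l) : 3 * E.n k ≤ 2 * E.n l := by
  obtain ⟨i, m, hd⟩ := E.exists_dat hk
  obtain ⟨j, m', hd'⟩ := E.exists_dat (k := l) (by omega)
  have hij : i ≤ j := block_le E.R (by have := E.R_ge; omega) hd.1 hd'.1 hd.block hd'.block hkl.le
  rw [hd.n_eq, hd'.n_eq]
  have hm := hd.m_le
  have hp : 2 * 2 ^ k ≤ 2 ^ l := by
    rw [← pow_succ']; exact Nat.pow_le_pow_right (by omega) hkl
  rcases hij.eq_or_lt with rfl | hlt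
  · have hmm : m ≤ m' := by
      by_contra h
      have := E.horder i hd.1 m' hd'.2.1 m hd.2.1 (by omega) l hd'.2.2 k hd.2.2
      omega
    generalize 2 ^ 2 ^ i ^ 4 = Q
    have : 3 * (2 ^ k + m) ≤ 2 * (2 ^ l + m') := by omega
    nlinarith [Nat.mul_le_mul_left Q this]
  · have hQ : 2 * 2 ^ 2 ^ i ^ 4 ≤ 2 ^ 2 ^ j ^ 4 := by
      rw [← pow_succ']
      refine Nat.pow_le_pow_right (by omega) ?_
      refine Nat.succ_le_of_lt (Nat.pow_lt_pow_right (by omega) ?_)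
      exact Nat.pow_lt_pow_left hlt (by omega)
    generalize 2 ^ 2 ^ i ^ 4 = Q at *
    generalize 2 ^ 2 ^ j ^ 4 = Q' at *
    have : 3 * (2 ^ k + m) ≤ 4 * (2 ^ l + m') := by omega
    calc 3 * (Q * (2 ^ k + m)) = Q * (3 * (2 ^ k + m)) := by ring
      _ ≤ Q * (4 * (2 ^ l + m')) := Nat.mul_le_mul_left _ this
      _ = 2 * ((2 * Q) * (2 ^ l + m')) := by ring
      _ ≤ 2 * (Q' * (2 ^ l + m')) := by gcongr

lemma n_pos {k : ℕ} (hk : 1 ≤ k) : 0 < E.n k := by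
  obtain ⟨i, m, hd⟩ := E.exists_dat hk
  rw [hd.n_eq]
  positivity

lemma n_lt {k l : ℕ} (hk : 1 ≤ k) (hkl : k < l) : E.n k < E.n l := by
  have := E.n_growth hk hkl
  have := E.n_pos hk
  omega

lemma n_inj {k l : ℕ} (hk : 1 ≤ k) (hl : 1 ≤ l) (h : E.n k = E.n l) : k = l := by
  rcases lt_trichotomy k l with h1 | h1 | h1
  · have := E.n_lt hk h1; omega
  · exact h1
  · have := E.n_lt hl h1; omega

/-- exponent comparison -/
lemma exp_cmp {k l i j m m' A : ℕ} (hd : E.Dat k i m) (hd' : E.Dat l j m')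
    (h : E.n k ≤ A * E.n l) : 2 ^ i ^ 4 + k ≤ 2 ^ j ^ 4 + l + (A + 1) := by
  have h1 : 2 ^ (2 ^ i ^ 4 + k) ≤ E.n k := by
    rw [hd.n_eq, pow_add]
    exact Nat.mul_le_mul_left _ (by omega)
  have h2 : E.n l ≤ 2 ^ (2 ^ j ^ 4 + l + 1) := by
    rw [hd'.n_eq, add_assoc, pow_add]
    refine Nat.mul_le_mul_left _ ?_
    have := hd'.m_le
    rw [pow_succ]; omega
  have h3 : 2 ^ (2 ^ i ^ 4 + k) ≤ 2 ^ (2 ^ j ^ 4 + l + (A + 1)) := by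
    calc 2 ^ (2 ^ i ^ 4 + k) ≤ A * E.n l := h1.trans h
      _ ≤ 2 ^ A * 2 ^ (2 ^ j ^ 4 + l + 1) := Nat.mul_le_mul Nat.lt_two_pow_self.le h2
      _ = 2 ^ (2 ^ j ^ 4 + l + (A + 1)) := by rw [← pow_add]; congr 1; ring
  exact (Nat.pow_le_pow_iff_right (by omega)).1 h3

/-- comparable elements in different blocks are small -/
lemma small_of_lt {k l i j m m' A : ℕ} (hd : E.Dat k i m) (hd' : E.Dat l j m')
    (h : E.n k ≤ A * E.n l) (hji : j < i) : l ≤ gfun E.R (A + 2) := by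
  have hR : 2 ≤ E.R := by have := E.R_ge; omega
  have h1 := exp_cmp hd hd' h
  have hlk : l ≤ k := by
    by_contra hh
    have := block_le E.R hR hd.1 hd'.1 hd.block hd'.block (by omega)
    omega
  have h2 : 2 * 2 ^ j ^ 4 ≤ 2 ^ i ^ 4 := by
    rw [← pow_succ']
    exact Nat.pow_le_pow_right (by omega) (Nat.succ_le_of_lt (Nat.pow_lt_pow_left hji (by omega)))
  have h3 : j ≤ j ^ 4 := Nat.le_self_pow (by omega) j
  have h4 : j ^ 4 < 2 ^ j ^ 4 := Nat.lt_two_pow_self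
  have h5 := ((mem_block _ _ _).1 hd'.block).2
  exact h5.trans (gfun_mono E.R hR (by omega) (by omega))

/-- block count -/
lemma block_count (a b : ℕ) (ha : 1 ≤ a) (hb : 1 ≤ b) (hab : a ≠ b) (c : ℤ) (D i : ℕ)
    (hi : 1 ≤ i) (G : Finset (ℕ × ℕ))
    (hG : ∀ p ∈ G, p.1 ∈ Block E.R i ∧ p.2 ∈ Block E.R i ∧ p.1 ≤ p.2 + D ∧ p.2 ≤ p.1 + D ∧
      (a : ℤ) * (E.n p.1 : ℤ) - (b : ℤ) * (E.n p.2 : ℤ) = c) 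
    (hinj : Set.InjOn Prod.fst (G : Set (ℕ × ℕ))) :
    (G.card : ℝ) ≤ (4 * D + 4) * (Mfun E.ε i + ((E.R : ℝ) ^ i / (Mfun E.ε i : ℝ) + 1)) := by
  classical
  set M := Mfun E.ε i with hM
  set X : ℝ := (E.R : ℝ) ^ i / (M : ℝ) + 1 with hX
  have hX0 : 0 ≤ X := by positivity
  set G1 := G.filter (fun p => ¬ ∃ m, E.Dat p.1 i m ∧ E.Dat p.2 i m) with hG1
  let T : ℕ → Finset (ℕ × ℕ) := fun t =>
    G.filter (fun p => (∃ m, E.Dat p.1 i m ∧ E.Dat p.2 i m) ∧ p.2 + D = p.1 + t)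
  have hcover : G ⊆ G1 ∪ (Finset.range (2 * D + 1)).biUnion T := by
    intro p hp
    by_cases h : ∃ m, E.Dat p.1 i m ∧ E.Dat p.2 i m
    · obtain ⟨-, -, h3, h4, -⟩ := hG p hp
      refine Finset.mem_union_right _ (Finset.mem_biUnion.2 ⟨p.2 + D - p.1, ?_, ?_⟩)
      · rw [Finset.mem_range]; omega
      · refine Finset.mem_filter.2 ⟨hp, h, by omega⟩
    · exact Finset.mem_union_left _ (Finset.mem_filter.2 ⟨hp, h⟩)
  have hcardfst : ∀ (S : Finset (ℕ × ℕ)) (U : Finset ℕ), S ⊆ G → (∀ p ∈ S, p.1 ∈ U) →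
      S.card ≤ U.card := by
    intro S U hS hU
    exact Finset.card_le_card_of_injOn Prod.fst hU (hinj.mono (Finset.coe_subset.2 hS))
  have hG1c : G1.card ≤ M * (2 * D + 2) := by
    have hsub : G1 ⊆ (Finset.Icc 1 M).biUnion (fun m => G1.filter (fun p => p.1 ∈ E.sub i m)) := by
      intro p hp
      obtain ⟨m, hm⟩ := dat_of_block hi (hG p (Finset.mem_filter.1 hp).1).1
      exact Finset.mem_biUnion.2 ⟨m, hm.2.1, Finset.mem_filter.2 ⟨hp, hm.2.2⟩⟩
    refine (Finset.card_le_card hsub).trans ?_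
    refine (Finset.card_biUnion_le_card_mul _ _ (2 * D + 2) ?_).trans (by simp)
    intro m hm
    obtain ⟨lo, up, hlu⟩ := E.hconsec i hi m hm
    have := hcardfst (G1.filter (fun p => p.1 ∈ E.sub i m))
      (Finset.Icc (up - D) up ∪ Finset.Icc lo (lo + D))
      ((Finset.filter_subset _ _).trans (Finset.filter_subset _ _)) ?_
    · refine this.trans ((Finset.card_union_le _ _).trans ?_)
      simp only [Nat.card_Icc]
      omega
    · intro p hp
      obtain ⟨hp1, hpm⟩ := Finset.mem_filter.1 hp
      obtain ⟨hpG, hne⟩ := Finset.mem_filter.1 hp1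
      obtain ⟨-, hb2, h3, h4, -⟩ := hG p hpG
      obtain ⟨m', hm'⟩ := dat_of_block hi hb2
      have hmm : m ≠ m' := by
        rintro rfl
        exact hne ⟨m, ⟨hi, hm, hpm⟩, hm'⟩
      have hpm2 := hpm
      rw [hlu, Finset.mem_Icc] at hpm2
      simp only [Finset.mem_union, Finset.mem_Icc]
      rcases lt_or_gt_of_ne hmm with h | h
      · have := E.horder i hi m hm m' hm'.2.1 h up
          (by rw [hlu, Finset.mem_Icc]; omega) p.2 hm'.2.2
        left; omega
      · have := E.horder i hi m' hm'.2.1 m hm h p.2 hm'.2.2 lo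
          (by rw [hlu, Finset.mem_Icc]; omega)
        right; omega
  have hkey : ∀ p ∈ G, ∀ q ∈ G, ∀ m m', E.Dat p.1 i m → E.Dat p.2 i m → E.Dat q.1 i m' →
      E.Dat q.2 i m' → (a : ℤ) * (2 ^ p.1 + m) - b * (2 ^ p.2 + m) =
        (a : ℤ) * (2 ^ q.1 + m') - b * (2 ^ q.2 + m') := by
    intro p hp q hq m m' h1 h2 h3 h4
    have e1 := (hG p hp).2.2.2.2
    have e2 := (hG q hq).2.2.2.2
    rw [h1.n_eq, h2.n_eq] at e1
    rw [h3.n_eq, h4.n_eq, ← e1] at e2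
    have hQ : (2 ^ 2 ^ i ^ 4 : ℕ) ≠ 0 := by positivity
    generalize (2 ^ 2 ^ i ^ 4 : ℕ) = Q at *
    have hQ' : (Q : ℤ) ≠ 0 := by exact_mod_cast hQ
    push_cast at e2
    apply mul_left_cancel₀ hQ'
    linarith
  have hTc : ∀ t, ((T t).card : ℝ) ≤ M + X := by
    intro t
    by_cases hz : ∃ p ∈ T t, a * 2 ^ p.1 = b * 2 ^ p.2
    · obtain ⟨p, hp, hpe⟩ := hz
      obtain ⟨hpG, ⟨m, hm1, hm2⟩, hpt⟩ := Finset.mem_filter.1 hp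
      have hc : (T t).card ≤ (E.sub i m).card := by
        refine hcardfst _ _ (Finset.filter_subset _ _) ?_
        intro q hq
        obtain ⟨hqG, ⟨m', hm1', hm2'⟩, hqt⟩ := Finset.mem_filter.1 hq
        have hqe : a * 2 ^ q.1 = b * 2 ^ q.2 := by
          have h1 : (a * 2 ^ p.1) * 2 ^ q.1 = (b * 2 ^ p.2) * 2 ^ q.1 := by rw [hpe]
          have h2 : 2 ^ p.2 * 2 ^ q.1 = 2 ^ p.1 * 2 ^ q.2 := by
            rw [← pow_add, ← pow_add]; congr 1; omega
          have h3 : (2 ^ p.1) * (a * 2 ^ q.1) = 2 ^ p.1 * (b * 2 ^ q.2) := by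
            calc (2 ^ p.1) * (a * 2 ^ q.1) = (a * 2 ^ p.1) * 2 ^ q.1 := by ring
              _ = b * (2 ^ p.2 * 2 ^ q.1) := by rw [h1]; ring
              _ = _ := by rw [h2]; ring
          exact Nat.eq_of_mul_eq_mul_left (by positivity) h3
        have hk := hkey p hpG q hqG m m' hm1 hm2 hm1' hm2'
        have hpe' : (a : ℤ) * 2 ^ p.1 = b * 2 ^ p.2 := by exact_mod_cast hpe
        have hqe' : (a : ℤ) * 2 ^ q.1 = b * 2 ^ q.2 := by exact_mod_cast hqe
        have h5 : ((a : ℤ) - b) * m = ((a : ℤ) - b) * m' := by linarith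
        have h6 : (m : ℤ) = m' := by
          apply mul_left_cancel₀ _ h5
          intro h0
          apply hab
          have : (a : ℤ) = b := by linarith
          exact_mod_cast this
        have h7 : m = m' := by exact_mod_cast h6
        rw [h7]; exact hm1'.2.2
      have h1 := (abs_le.1 (E.hcard i hi m hm1.2.1)).2
      have h2 : ((T t).card : ℝ) ≤ (E.sub i m).card := by exact_mod_cast hc
      have h3 : (0 : ℝ) ≤ M := by positivity
      linarith
    · push Not at hz
      have hc : (T t).card ≤ M := by
        have hsub : T t ⊆ (Finset.Icc 1 M).biUnion
            (fun m => (T t).filter (fun p => E.Dat p.1 i m ∧ E.Dat p.2 i m)) := by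
          intro p hp
          obtain ⟨hpG, ⟨m, hm1, hm2⟩, hpt⟩ := Finset.mem_filter.1 hp
          exact Finset.mem_biUnion.2 ⟨m, hm1.2.1, Finset.mem_filter.2 ⟨hp, hm1, hm2⟩⟩
        refine (Finset.card_le_card hsub).trans ?_
        refine (Finset.card_biUnion_le_card_mul _ _ 1 ?_).trans (by simp)
        intro m hm
        rw [Finset.card_le_one]
        have main : ∀ p ∈ T t, ∀ q ∈ T t, E.Dat p.1 i m → E.Dat p.2 i m → E.Dat q.1 i m →
            E.Dat q.2 i m → ¬ p.1 < q.1 := by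
          intro p hp q hq h1 h2 h3 h4 hlt
          obtain ⟨hpG, -, hpt⟩ := Finset.mem_filter.1 hp
          obtain ⟨hqG, -, hqt⟩ := Finset.mem_filter.1 hq
          have hk := hkey p hpG q hqG m m h1 h2 h3 h4
          obtain ⟨u, hu⟩ : ∃ u, q.1 = p.1 + u := ⟨q.1 - p.1, by omega⟩
          have hu2 : q.2 = p.2 + u := by omega
          have hu0 : u ≠ 0 := by omega
          rw [hu, hu2, pow_add, pow_add] at hk
          have hprod : ((a : ℤ) * 2 ^ p.1 - b * 2 ^ p.2) * (2 ^ u - 1) = 0 := by linarith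
          rcases mul_eq_zero.1 hprod with h | h
          · apply hz p hp
            have : (a : ℤ) * 2 ^ p.1 = b * 2 ^ p.2 := by linarith
            exact_mod_cast this
          · have : (1 : ℤ) < 2 ^ u := one_lt_pow₀ (by norm_num) hu0
            linarith
        intro p hp q hq
        obtain ⟨hp1, hp2, hp3⟩ := Finset.mem_filter.1 hp
        obtain ⟨hq1, hq2, hq3⟩ := Finset.mem_filter.1 hq
        have h1 := main p hp1 q hq1 hp2 hp3 hq2 hq3
        have h2 := main q hq1 p hp1 hq2 hq3 hp2 hp3
        exact hinj (Finset.mem_filter.1 hp1).1 (Finset.mem_filter.1 hq1).1 (by omega)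
      have : ((T t).card : ℝ) ≤ M := by exact_mod_cast hc
      linarith
  have hfin : (G.card : ℝ) ≤ G1.card + ∑ t ∈ Finset.range (2 * D + 1), ((T t).card : ℝ) := by
    have : G.card ≤ G1.card + ∑ t ∈ Finset.range (2 * D + 1), (T t).card :=
      (Finset.card_le_card hcover).trans
        ((Finset.card_union_le _ _).trans (by gcongr; exact Finset.card_biUnion_le))
    exact_mod_cast this
  have hs : ∑ t ∈ Finset.range (2 * D + 1), ((T t).card : ℝ) ≤ (2 * D + 1) * (M + X) := by
    refine (Finset.sum_le_sum (fun t _ => hTc t)).trans (le_of_eq ?_)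
    simp; try ring
  have hg : (G1.card : ℝ) ≤ M * (2 * D + 2) := by exact_mod_cast hG1c
  have hD : (0 : ℝ) ≤ D := by positivity
  have hM0 : (0 : ℝ) ≤ M := by positivity
  nlinarith [mul_nonneg hD hX0, mul_nonneg hD hM0]

/-- the comparison quantity -/
lemma block_bound (i : ℕ) (hi : 1 ≤ i) :
    (Mfun E.ε i : ℝ) + ((E.R : ℝ) ^ i / (Mfun E.ε i : ℝ) + 1) ≤
      3 * ((E.R : ℝ) ^ i / (i : ℝ) ^ (1 - E.ε)) := by
  have hi1 : (1 : ℝ) ≤ i := by exact_mod_cast hi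
  have hp : (0 : ℝ) < (i : ℝ) ^ (1 - E.ε) := Real.rpow_pos_of_pos (by linarith) _
  have hle : (i : ℝ) ^ (1 - E.ε) ≤ i := by
    calc (i : ℝ) ^ (1 - E.ε) ≤ (i : ℝ) ^ (1 : ℝ) :=
          Real.rpow_le_rpow_of_exponent_le hi1 (by linarith [E.hε.1])
      _ = i := Real.rpow_one _
  have hM1 : (Mfun E.ε i : ℝ) ≤ i := by exact_mod_cast E.M_le i hi
  have hM2 : (i : ℝ) ^ (1 - E.ε) ≤ Mfun E.ε i := Nat.le_ceil _
  have hR : (9 : ℝ) ≤ E.R := by exact_mod_cast E.R_ge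
  have hpow : (i : ℝ) * i ≤ (E.R : ℝ) ^ i := by
    have h2 : (i : ℝ) ≤ 2 ^ i := by exact_mod_cast (Nat.lt_two_pow_self (n := i)).le
    calc (i : ℝ) * i ≤ 2 ^ i * 2 ^ i := by gcongr
      _ = 4 ^ i := by rw [← mul_pow]; norm_num
      _ ≤ _ := by gcongr; linarith
  have h1 : (i : ℝ) ≤ (E.R : ℝ) ^ i / (i : ℝ) ^ (1 - E.ε) := by
    rw [le_div_iff₀ hp]
    exact (mul_le_mul_of_nonneg_left hle (by linarith)).trans hpow
  have h2 : (E.R : ℝ) ^ i / (Mfun E.ε i : ℝ) ≤ (E.R : ℝ) ^ i / (i : ℝ) ^ (1 - E.ε) := by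
    gcongr
  linarith

lemma sum_bound (I : ℕ) (hI : 1 ≤ I) :
    ∑ i ∈ Finset.Icc 1 I, (E.R : ℝ) ^ i / (i : ℝ) ^ (1 - E.ε) ≤
      2 * ((E.R : ℝ) ^ I / (I : ℝ) ^ (1 - E.ε)) := by
  have hR : (9 : ℝ) ≤ E.R := by exact_mod_cast E.R_ge
  induction I, hI using Nat.le_induction with
  | base => simp; linarith
  | succ I hI ih =>
    rw [Finset.sum_Icc_succ_top (by omega)]
    have hi1 : (1 : ℝ) ≤ I := by exact_mod_cast hI
    have hp : (0 : ℝ) < (I : ℝ) ^ (1 - E.ε) := Real.rpow_pos_of_pos (by linarith) _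
    have hp' : (0 : ℝ) < ((I + 1 : ℕ) : ℝ) ^ (1 - E.ε) := 
      Real.rpow_pos_of_pos (by positivity) _
    have h2 : ((I + 1 : ℕ) : ℝ) ^ (1 - E.ε) ≤ 2 * (I : ℝ) ^ (1 - E.ε) := by
      have he : 0 ≤ 1 - E.ε := by linarith [E.hε.2]
      calc ((I + 1 : ℕ) : ℝ) ^ (1 - E.ε) ≤ (2 * (I : ℝ)) ^ (1 - E.ε) := by
            apply Real.rpow_le_rpow (by positivity) _ he
            push_cast; linarith
        _ = 2 ^ (1 - E.ε) * (I : ℝ) ^ (1 - E.ε) := Real.mul_rpow (by norm_num) (by linarith)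
        _ ≤ 2 ^ (1 : ℝ) * (I : ℝ) ^ (1 - E.ε) := by
            gcongr
            · norm_num
            · linarith [E.hε.1]
        _ = _ := by rw [Real.rpow_one]
    have h3 : 2 * ((E.R : ℝ) ^ I / (I : ℝ) ^ (1 - E.ε)) ≤
        (E.R : ℝ) ^ (I + 1) / ((I + 1 : ℕ) : ℝ) ^ (1 - E.ε) := by
      rw [← mul_div_assoc, div_le_div_iff₀ hp hp', pow_succ]
      have hRI : 0 < (E.R : ℝ) ^ I := by positivity
      calc 2 * (E.R : ℝ) ^ I * ((I + 1 : ℕ) : ℝ) ^ (1 - E.ε)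
          ≤ 2 * (E.R : ℝ) ^ I * (2 * (I : ℝ) ^ (1 - E.ε)) := by gcongr
        _ = (E.R : ℝ) ^ I * 4 * (I : ℝ) ^ (1 - E.ε) := by ring
        _ ≤ _ := by gcongr; linarith
    linarith

lemma final_bound (I N : ℕ) (hI : 1 ≤ I) (hN : 2 ≤ N) (h : N ∈ Block E.R I) :
    (E.R : ℝ) ^ I / (I : ℝ) ^ (1 - E.ε) ≤
      (E.R * (2 * Real.log E.R) ^ (1 - E.ε)) * N / Real.log N ^ (1 - E.ε) := by
  have hR : (9 : ℝ) ≤ E.R := by exact_mod_cast E.R_ge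
  have hR2 : 2 ≤ E.R := by have := E.R_ge; omega
  obtain ⟨h1, h2⟩ := (mem_block _ _ _).1 h
  have hi1 : (1 : ℝ) ≤ I := by exact_mod_cast hI
  have hN1 : (1 : ℝ) < N := by exact_mod_cast hN
  have hlogN : 0 < Real.log N := Real.log_pos hN1
  have hlogR : 0 < Real.log E.R := Real.log_pos (by linarith)
  have hp : (0 : ℝ) < (I : ℝ) ^ (1 - E.ε) := Real.rpow_pos_of_pos (by linarith) _
  have hp' : 0 < Real.log N ^ (1 - E.ε) := Real.rpow_pos_of_pos hlogN _
  have hA : (E.R : ℝ) ^ I ≤ E.R * N := by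
    have := (gfun_lower E.R hR2 I hI).trans (Nat.mul_le_mul_left _ (Nat.succ_le_of_lt h1))
    exact_mod_cast this
  have hB : Real.log N ≤ (2 * Real.log E.R) * I := by
    have : N ≤ E.R ^ (I + 1) := h2.trans (gfun_upper _ hR2 _)
    have h3 : (N : ℝ) ≤ (E.R : ℝ) ^ (I + 1) := by exact_mod_cast this
    have h4 := Real.log_le_log (by linarith) h3
    rw [Real.log_pow] at h4
    push_cast at h4
    nlinarith
  have hC : Real.log N ^ (1 - E.ε) ≤ (2 * Real.log E.R) ^ (1 - E.ε) * (I : ℝ) ^ (1 - E.ε) := by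
    rw [← Real.mul_rpow (by linarith) (by linarith)]
    exact Real.rpow_le_rpow hlogN.le hB (by linarith [E.hε.2])
  rw [div_le_div_iff₀ hp hp']
  calc (E.R : ℝ) ^ I * Real.log N ^ (1 - E.ε)
      ≤ (E.R * N) * ((2 * Real.log E.R) ^ (1 - E.ε) * (I : ℝ) ^ (1 - E.ε)) := by gcongr
    _ = _ := by ring

set_option maxHeartbeats 1000000 in
/-- combinatorial main bound -/
lemma main_count (a b : ℕ) (ha : 1 ≤ a) (hb : 1 ≤ b) (hab : a ≠ b) (N I : ℕ) (hI : 1 ≤ I)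
    (hN : N ∈ Block E.R I) (c : ℤ) :
    (((Finset.Icc 1 N ×ˢ Finset.Icc 1 N).filter
          (fun p => (a : ℤ) * (E.n p.1 : ℤ) - (b : ℤ) * (E.n p.2 : ℤ) = c)).card : ℝ) ≤
      (1 + 2 * gfun E.R (3 * (a + b) + 2)) + ∑ i ∈ Finset.Icc 1 I,
        (4 * (3 * (a + b) + 1 : ℕ) + 4 : ℝ) *
          (Mfun E.ε i + ((E.R : ℝ) ^ i / (Mfun E.ε i : ℝ) + 1)) := by
  classical
  have hR2 : 2 ≤ E.R := by have := E.R_ge; omega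
  set F := (Finset.Icc 1 N ×ˢ Finset.Icc 1 N).filter
          (fun p => (a : ℤ) * (E.n p.1 : ℤ) - (b : ℤ) * (E.n p.2 : ℤ) = c) with hF
  set A := 3 * (a + b) with hA
  set K := gfun E.R (A + 2) with hK
  have memF : ∀ p ∈ F, (1 ≤ p.1 ∧ p.1 ≤ N) ∧ (1 ≤ p.2 ∧ p.2 ≤ N) ∧
      (a : ℤ) * (E.n p.1 : ℤ) - (b : ℤ) * (E.n p.2 : ℤ) = c := by
    intro p hp
    simpa [hF, and_assoc] using hp
  have ha0 : (a : ℤ) ≠ 0 := by positivity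
  have hb0 : (b : ℤ) ≠ 0 := by positivity
  have inj1 : Set.InjOn Prod.fst (F : Set (ℕ × ℕ)) := by
    intro p hp q hq h
    have hp' := memF p hp
    have hq' := memF q hq
    have e := hp'.2.2.trans hq'.2.2.symm
    rw [h] at e
    have : (b : ℤ) * (E.n p.2 : ℤ) = b * E.n q.2 := by linarith
    have := mul_left_cancel₀ hb0 this
    exact Prod.ext h (E.n_inj hp'.2.1.1 hq'.2.1.1 (by exact_mod_cast this))
  have inj2 : Set.InjOn Prod.snd (F : Set (ℕ × ℕ)) := by
    intro p hp q hq h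
    have hp' := memF p hp
    have hq' := memF q hq
    have e := hp'.2.2.trans hq'.2.2.symm
    rw [h] at e
    have : (a : ℤ) * (E.n p.1 : ℤ) = a * E.n q.1 := by linarith
    have := mul_left_cancel₀ ha0 this
    exact Prod.ext (E.n_inj hp'.1.1 hq'.1.1 (by exact_mod_cast this)) h
  have comp : ∀ p ∈ F, ∀ q ∈ F, p.1 < q.1 → E.n q.1 ≤ A * E.n q.2 ∧ E.n q.2 ≤ A * E.n q.1 := by
    intro p hp q hq hlt
    have hp' := memF p hp
    have hq' := memF q hq
    have e : (a : ℤ) * E.n p.1 - b * E.n p.2 = a * E.n q.1 - b * E.n q.2 :=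
      hp'.2.2.trans hq'.2.2.symm
    have e' : a * E.n p.1 + b * E.n q.2 = a * E.n q.1 + b * E.n p.2 := by
      zify; linarith
    have g1 := E.n_growth hp'.1.1 hlt
    have hlt2 : p.2 < q.2 := by
      by_contra hcon
      have h1 : E.n q.2 ≤ E.n p.2 := by
        rcases (not_lt.1 hcon).eq_or_lt with h | h
        · rw [h]
        · exact (E.n_lt hq'.2.1.1 h).le
      have h2 := E.n_lt hp'.1.1 hlt
      nlinarith
    have g2 := E.n_growth hp'.2.1.1 hlt2
    have ga := Nat.mul_le_mul_left a g1
    have gb := Nat.mul_le_mul_left b g2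
    have k1 : a * E.n q.1 ≤ 3 * (b * E.n q.2) := by nlinarith
    have k2 : b * E.n q.2 ≤ 3 * (a * E.n q.1) := by nlinarith
    constructor
    · nlinarith [Nat.zero_le (a * E.n q.2), Nat.mul_le_mul_right (E.n q.1) ha]
    · nlinarith [Nat.zero_le (b * E.n q.1), Nat.mul_le_mul_right (E.n q.2) hb]
  let Gs : ℕ → Finset (ℕ × ℕ) := fun i => F.filter (fun p =>
    p.1 ∈ Block E.R i ∧ p.2 ∈ Block E.R i ∧ p.1 ≤ p.2 + (A + 1) ∧ p.2 ≤ p.1 + (A + 1))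
  have hGs : ∀ i ∈ Finset.Icc 1 I, ((Gs i).card : ℝ) ≤ (4 * (A + 1 : ℕ) + 4 : ℝ) *
          (Mfun E.ε i + ((E.R : ℝ) ^ i / (Mfun E.ε i : ℝ) + 1)) := by
    intro i hi
    refine block_count a b ha hb hab c (A + 1) i (Finset.mem_Icc.1 hi).1 (Gs i) ?_ ?_
    · intro p hp
      obtain ⟨hpF, h1, h2, h3, h4⟩ := Finset.mem_filter.1 hp
      exact ⟨h1, h2, h3, h4, (memF p hpF).2.2⟩
    · exact inj1.mono (Finset.coe_subset.2 (Finset.filter_subset _ _))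
  obtain ⟨p0, hp0⟩ : ∃ p0 : ℕ × ℕ, ∀ p ∈ F, p ≠ p0 → p0 ∈ F ∧ p0.1 < p.1 := by
    rcases F.eq_empty_or_nonempty with h | h
    · exact ⟨(0, 0), by simp [h]⟩
    · obtain ⟨p0, h0, hmin⟩ := Finset.exists_min_image F Prod.fst h
      refine ⟨p0, fun p hp hne => ⟨h0, lt_of_le_of_ne (hmin p hp) ?_⟩⟩
      intro he
      exact hne (inj1 hp h0 he.symm)
  set F1 := F.filter (fun p => p.1 ≤ K) with hF1
  set F2 := F.filter (fun p => p.2 ≤ K) with hF2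
  have cF1 : F1.card ≤ K := by
    have := Finset.card_le_card_of_injOn (s := F1) (t := Finset.Icc 1 K) Prod.fst
      (fun p hp => by
        obtain ⟨h1, h2⟩ := Finset.mem_filter.1 hp
        exact Finset.mem_coe.2 (Finset.mem_Icc.2 ⟨(memF p h1).1.1, h2⟩))
      (inj1.mono (Finset.coe_subset.2 (Finset.filter_subset _ _)))
    simpa using this
  have cF2 : F2.card ≤ K := by
    have := Finset.card_le_card_of_injOn (s := F2) (t := Finset.Icc 1 K) Prod.snd
      (fun p hp => by
        obtain ⟨h1, h2⟩ := Finset.mem_filter.1 hp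
        exact Finset.mem_coe.2 (Finset.mem_Icc.2 ⟨(memF p h1).2.1.1, h2⟩))
      (inj2.mono (Finset.coe_subset.2 (Finset.filter_subset _ _)))
    simpa using this
  have hcover : F ⊆ ({p0} ∪ (F1 ∪ F2)) ∪ (Finset.Icc 1 I).biUnion Gs := by
    intro p hp
    by_cases hpp : p = p0
    · simp [hpp]
    obtain ⟨h0, hlt⟩ := hp0 p hp hpp
    obtain ⟨c1, c2⟩ := comp p0 h0 p hp hlt
    have hp' := memF p hp
    obtain ⟨i, m, hd⟩ := E.exists_dat hp'.1.1
    obtain ⟨j, m', hd'⟩ := E.exists_dat hp'.2.1.1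
    rcases lt_trichotomy i j with h | h | h
    · have := small_of_lt hd' hd c2 h
      exact Finset.mem_union_left _ (Finset.mem_union_right _ (Finset.mem_union_left _
        (Finset.mem_filter.2 ⟨hp, this⟩)))
    · subst h
      have e1 := exp_cmp hd hd' c1
      have e2 := exp_cmp hd' hd c2
      refine Finset.mem_union_right _ (Finset.mem_biUnion.2 ⟨i, ?_, ?_⟩)
      · exact Finset.mem_Icc.2 ⟨hd.1, block_le E.R hR2 hd.1 hI hd.block hN hp'.1.2⟩
      · exact Finset.mem_filter.2 ⟨hp, hd.block, hd'.block, by omega, by omega⟩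
    · have := small_of_lt hd hd' c1 h
      exact Finset.mem_union_left _ (Finset.mem_union_right _ (Finset.mem_union_right _
        (Finset.mem_filter.2 ⟨hp, this⟩)))
  have hcount : F.card ≤ (1 + 2 * K) + ∑ i ∈ Finset.Icc 1 I, (Gs i).card := by
    refine (Finset.card_le_card hcover).trans ((Finset.card_union_le _ _).trans ?_)
    refine Nat.add_le_add ?_ Finset.card_biUnion_le
    refine (Finset.card_union_le _ _).trans ?_
    have := Finset.card_union_le F1 F2
    rw [Finset.card_singleton]
    omega
  have hcount' : (F.card : ℝ) ≤ (1 + 2 * K) + ∑ i ∈ Finset.Icc 1 I, ((Gs i).card : ℝ) := by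
    exact_mod_cast hcount
  exact hcount'.trans (by gcongr with i hi; exact hGs i hi)

end ExplicitConstruction

/-- Corollary 2.3: the explicit construction satisfies the Diophantine condition
`L(N,a,b,c) = O(N/(log N)^(1-ε))` uniformly in `c ≥ 0`, for all `a ≠ b`. -/
theorem statement5 (E : ExplicitConstruction) (a b : ℕ) (ha : 1 ≤ a) (hb : 1 ≤ b)
    (hab : a ≠ b) :
    ∃ C : ℝ, ∀ N : ℕ, 2 ≤ N → ∀ c : ℤ, 0 ≤ c →
      (((Finset.Icc 1 N ×ˢ Finset.Icc 1 N).filter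
          (fun p => (a : ℤ) * (E.n p.1 : ℤ) - (b : ℤ) * (E.n p.2 : ℤ) = c)).card : ℝ)
        ≤ C * N / Real.log N ^ (1 - E.ε) := by
  have hR2 : 2 ≤ E.R := by have := E.R_ge; omega
  set B : ℝ := 1 + 2 * gfun E.R (3 * (a + b) + 2) with hB
  set D : ℝ := 4 * (3 * (a + b) + 1 : ℕ) + 4 with hD
  have hB0 : 0 ≤ B := by positivity
  have hD0 : 0 ≤ D := by positivity
  refine ⟨(B + 6 * D) * (E.R * (2 * Real.log E.R) ^ (1 - E.ε)), ?_⟩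
  intro N hN c _
  obtain ⟨I, hI, hNI⟩ := exists_block E.R hR2 N (by omega)
  refine (ExplicitConstruction.main_count a b ha hb hab N I hI hNI c).trans ?_
  have hfb := ExplicitConstruction.final_bound I N hI hN hNI
  set Y : ℝ := (E.R : ℝ) ^ I / (I : ℝ) ^ (1 - E.ε) with hY
  have hone : 1 ≤ Y := by
    have h1 := ExplicitConstruction.block_bound (E := E) I hI
    have hi1 : (1 : ℝ) ≤ I := by exact_mod_cast hI
    have hR : (9 : ℝ) ≤ E.R := by exact_mod_cast E.R_ge
    rw [hY, le_div_iff₀ (Real.rpow_pos_of_pos (by linarith) _), one_mul]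
    calc (I : ℝ) ^ (1 - E.ε) ≤ (I : ℝ) ^ (1 : ℝ) :=
          Real.rpow_le_rpow_of_exponent_le hi1 (by linarith [E.hε.1])
      _ = I := Real.rpow_one _
      _ ≤ 2 ^ I := by exact_mod_cast (Nat.lt_two_pow_self (n := I)).le
      _ ≤ _ := by gcongr; linarith
  have hsum : ∑ i ∈ Finset.Icc 1 I,
        D * (Mfun E.ε i + ((E.R : ℝ) ^ i / (Mfun E.ε i : ℝ) + 1)) ≤ 6 * D * Y := by
    rw [← Finset.mul_sum]
    have h1 : ∑ i ∈ Finset.Icc 1 I, ((Mfun E.ε i : ℝ) + ((E.R : ℝ) ^ i / (Mfun E.ε i : ℝ) + 1)) ≤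
        ∑ i ∈ Finset.Icc 1 I, 3 * ((E.R : ℝ) ^ i / (i : ℝ) ^ (1 - E.ε)) :=
      Finset.sum_le_sum fun i hi =>
        ExplicitConstruction.block_bound i (Finset.mem_Icc.1 hi).1
    rw [← Finset.mul_sum] at h1
    have h2 := ExplicitConstruction.sum_bound (E := E) I hI
    nlinarith [mul_le_mul_of_nonneg_left (h1.trans (mul_le_mul_of_nonneg_left h2 (by norm_num))) hD0]
  calc _ ≤ B + 6 * D * Y := by gcongr
    _ ≤ (B + 6 * D) * Y := by nlinarith
    _ ≤ (B + 6 * D) * ((E.R * (2 * Real.log E.R) ^ (1 - E.ε)) * N / Real.log N ^ (1 - E.ε)) := by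
        gcongr
    _ = _ := by ring
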